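/- For independent random variables X ~ Poi(x) and Y ~ Poi(1) with x > 0, E[|X − Y|] = 2e^{−x−1}(I₀(2√x) + √x·I₁(2√x)) + (1 − x)(1 − 2Q₁(√(2x), √2)), where I_k denotes the modified Bessel function of order k and Q₁ is the Marcum Q function Q₁(a,b) = e^{−(a²+b²)/2} Σ_{k=0}^∞ (a/b)^k I_k(ab). -/

import Mathlib

open MeasureTheory ProbabilityTheory

/-- Modified Bessel function of the first kind of nonnegative integer order. -/
noncomputable def besselI (k : ℕ) (y : ℝ) : ℝ :=
  ∑' i : ℕ, (y / 2) ^ (2 * i + k) / (Nat.factorial i * Nat.factorial (i + k))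

/-- Marcum Q function `Q₁(a,b) = e^{−(a²+b²)/2} Σ_{k=0}^∞ (a/b)^k I_k(ab)`. -/
noncomputable def marcumQ1 (a b : ℝ) : ℝ :=
  Real.exp (-(a ^ 2 + b ^ 2) / 2) * ∑' k : ℕ, (a / b) ^ k * besselI k (a * b)

/-!
Size-biasing a Poisson variable of rate `a` shifts it by one: `E[X f(X)] = a E[f(X + 1)]`.
Conditionally on the other variable this gives `E[X; Y < X] = a P(Y ≤ X)` and
`E[Y; Y < X] = b P(Y + 1 < X)`, so that the positive part of `X - Y` has expectation
`(a - b) P(Y ≤ X) + b (P(X = Y) + P(X = Y + 1))`. The three probabilities come from the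
power series of the Bessel functions, and `|d| = 2 d⁺ - d` finishes the computation.
-/

open scoped NNReal ENNReal

section HasLaw

variable {Ω α : Type*} {mΩ : MeasurableSpace Ω} {μ : Measure Ω} [IsFiniteMeasure μ]

lemma nullMeasurableSet_of_measure_add_measure_compl_le {s : Set Ω}
    (hs : μ s + μ sᶜ ≤ μ Set.univ) : NullMeasurableSet s μ := by
  set t := (toMeasurable μ sᶜ)ᶜ with ht
  have t_meas : MeasurableSet t := (measurableSet_toMeasurable μ sᶜ).compl
  have t_subset : t ⊆ s := Set.compl_subset_comm.1 (subset_toMeasurable μ sᶜ)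
  have measure_le : μ s ≤ μ t := by
    rw [ht, measure_compl (measurableSet_toMeasurable μ sᶜ) (measure_ne_top _ _),
      measure_toMeasurable]
    exact ENNReal.le_sub_of_add_le_right (measure_ne_top _ _) hs
  exact t_meas.nullMeasurableSet.congr <|
    ae_eq_of_subset_of_measure_ge t_subset measure_le t_meas.nullMeasurableSet (measure_ne_top _ _)

/- Countable subadditivity bounds the outer measures of `X ⁻¹' s` and of its complement by `ν s` and
`ν sᶜ`; the total mass leaves no room for a gap, which forces measurability of `X`. -/
lemma hasLaw_of_measure_preimage_singleton_eq [Countable α] [MeasurableSpace α]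
    [MeasurableSingletonClass α] {ν : Measure α} {X : Ω → α} (hν : ν Set.univ ≤ μ Set.univ)
    (h : ∀ a, μ (X ⁻¹' {a}) = ν {a}) : HasLaw X ν μ := by
  have measure_preimage_le (s : Set α) : μ (X ⁻¹' s) ≤ ν s := calc
    μ (X ⁻¹' s) = μ (⋃ a ∈ s, X ⁻¹' {a}) := by rw [Set.biUnion_preimage_singleton]
    _ ≤ ∑' a : s, μ (X ⁻¹' {a.1}) := measure_biUnion_le μ s.to_countable _
    _ = ∑' a : s, ν {a.1} := by simp only [h]
    _ = ν s := by
      simpa using tsum_measure_preimage_singleton (μ := ν) s.to_countable (f := id)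
        fun a _ ↦ measurableSet_singleton a
  have aemeasurable_X : AEMeasurable X μ := by
    refine NullMeasurable.aemeasurable fun s hs ↦
      nullMeasurableSet_of_measure_add_measure_compl_le ?_
    calc
      μ (X ⁻¹' s) + μ (X ⁻¹' s)ᶜ ≤ ν s + ν sᶜ :=
        add_le_add (measure_preimage_le s) (measure_preimage_le sᶜ)
      _ = ν Set.univ := measure_add_measure_compl hs
      _ ≤ μ Set.univ := hν
  refine ⟨aemeasurable_X, Measure.ext_of_singleton fun a ↦ ?_⟩
  rw [Measure.map_apply_of_aemeasurable aemeasurable_X (measurableSet_singleton a), h]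

end HasLaw

lemma integral_abs_eq_two_mul_setIntegral_pos_sub {α : Type*} {mα : MeasurableSpace α}
    {μ : Measure α} {f : α → ℝ} (hf : Integrable f μ) :
    ∫ x, |f x| ∂μ = 2 * ∫ x in {x | 0 < f x}, f x ∂μ - ∫ x, f x ∂μ := by
  have pos_meas : NullMeasurableSet {x | 0 < f x} μ :=
    nullMeasurableSet_lt aemeasurable_const hf.aemeasurable
  have abs_eq (x : α) : |f x| = 2 * Set.indicator {x | 0 < f x} f x - f x := by
    by_cases hx : 0 < f x
    · rw [Set.indicator_of_mem (by exact hx), abs_of_pos hx]; ring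
    · rw [Set.indicator_of_notMem (by exact hx), abs_of_nonpos (not_lt.1 hx)]; ring
  simp only [abs_eq]
  rw [integral_sub ((hf.indicator₀ pos_meas).const_mul 2) hf, integral_const_mul,
    integral_indicator₀ pos_meas]

section SizeBias

lemma withDensity_natCast_poissonMeasure (r : ℝ≥0) :
    Po(r).withDensity (fun n ↦ (n : ℝ≥0∞)) = r • Po(r).map (· + 1) := by
  refine Measure.ext_of_singleton fun n ↦ ?_
  rw [withDensity_apply _ (measurableSet_singleton n), lintegral_singleton, Measure.smul_apply,
    Measure.map_apply .of_discrete (measurableSet_singleton n)]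
  cases n with
  | zero => simp [Set.preimage]
  | succ n =>
    have preimage_succ : (· + 1) ⁻¹' {n + 1} = ({n} : Set ℕ) := by ext; simp
    rw [preimage_succ, ENNReal.smul_def, smul_eq_mul,
      ← ENNReal.toReal_eq_toReal_iff' (by finiteness) (by finiteness)]
    simp only [ENNReal.toReal_mul, ENNReal.toReal_natCast,
      ENNReal.coe_toReal, ← measureReal_def, poissonMeasure_real_singleton, Nat.factorial_succ]
    push_cast
    field_simp
    ring

lemma integrable_natCast_poissonMeasure (r : ℝ≥0) : Integrable (fun n : ℕ ↦ (n : ℝ)) Po(r) := by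
  refine integrable_toReal_of_lintegral_ne_top (f := fun n : ℕ ↦ (n : ℝ≥0∞)) .of_discrete ?_
  rw [← setLIntegral_univ, ← withDensity_apply _ .univ, withDensity_natCast_poissonMeasure]
  finiteness

variable {α : Type*} [MeasurableSpace α] (ν : Measure α) [SFinite ν] (r : ℝ≥0)

lemma withDensity_fst_poissonMeasure_prod :
    (Po(r).prod ν).withDensity (fun p ↦ (p.1 : ℝ≥0∞)) =
      r • (Po(r).prod ν).map (Prod.map (· + 1) id) := by
  rw [← prod_withDensity_left .of_discrete, withDensity_natCast_poissonMeasure,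
    Measure.prod_smul_left, ← Measure.map_prod_map _ _ .of_discrete measurable_id, Measure.map_id]

lemma setIntegral_fst_poissonMeasure_prod {s : Set (ℕ × α)} (hs : MeasurableSet s) :
    ∫ p in s, (p.1 : ℝ) ∂Po(r).prod ν = r * (Po(r).prod ν).real {p | (p.1 + 1, p.2) ∈ s} := by
  have natCast_fst_meas : Measurable fun p : ℕ × α ↦ (p.1 : ℝ≥0∞) := by fun_prop
  calc
    ∫ p in s, (p.1 : ℝ) ∂Po(r).prod ν = (∫⁻ p in s, (p.1 : ℝ≥0∞) ∂Po(r).prod ν).toReal :=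
      integral_toReal natCast_fst_meas.aemeasurable (by simp)
    _ = ((r • (Po(r).prod ν).map (Prod.map (· + 1) id)) s).toReal := by
      rw [← withDensity_apply _ hs, withDensity_fst_poissonMeasure_prod]
    _ = r * (Po(r).prod ν).real {p | (p.1 + 1, p.2) ∈ s} := by
      rw [Measure.smul_apply, Measure.map_apply (by fun_prop) hs, ENNReal.smul_def, smul_eq_mul,
        ENNReal.toReal_mul]
      rfl

lemma setIntegral_snd_prod_poissonMeasure {s : Set (α × ℕ)} (hs : MeasurableSet s) :
    ∫ p in s, (p.2 : ℝ) ∂ν.prod Po(r) = r * (ν.prod Po(r)).real {p | (p.1, p.2 + 1) ∈ s} := by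
  have shift_meas : MeasurableSet {p : α × ℕ | (p.1, p.2 + 1) ∈ s} :=
    measurableSet_preimage (by fun_prop) hs
  rw [← Measure.prod_swap, setIntegral_map hs (by fun_prop) (by fun_prop),
    map_measureReal_apply measurable_swap shift_meas]
  exact setIntegral_fst_poissonMeasure_prod ν r (measurable_swap hs)

end SizeBias

section Skellam

variable {a b : ℝ≥0}

lemma measureReal_poissonMeasure_prod_fst_eq_snd_add (hb : b ≠ 0) (k : ℕ) :
    (Po(a).prod Po(b)).real {p | p.1 = p.2 + k} =
      Real.exp (-a - b) * (√(a / b) ^ k * besselI k (2 * √(a * b))) := by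
  have sqrt_div_mul_sqrt_mul : √(a / b : ℝ) * √(a * b) = a := by
    rw [← Real.sqrt_mul (by positivity), show (a / b * (a * b) : ℝ) = a * a by field_simp,
      Real.sqrt_mul_self a.coe_nonneg]
  have sqrt_pow_mul_sqrt_pow (j : ℕ) :
      √(a / b : ℝ) ^ k * √(a * b) ^ (2 * j + k) = a ^ (j + k) * b ^ j := calc
    √(a / b : ℝ) ^ k * √(a * b) ^ (2 * j + k)
        = (√(a / b) * √(a * b)) ^ k * (√(a * b) ^ 2) ^ j := by ring
    _ = a ^ (j + k) * b ^ j := by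
      rw [sqrt_div_mul_sqrt_mul, Real.sq_sqrt (by positivity)]
      ring
  have summand_eq (j : ℕ) : Real.exp (-b) * b ^ j / j.factorial * Po(a).real {j + k} =
      Real.exp (-a - b) * (√(a / b) ^ k *
        ((2 * √(a * b) / 2) ^ (2 * j + k) / (j.factorial * (j + k).factorial))) := by
    rw [poissonMeasure_real_singleton, mul_div_cancel_left₀ _ two_ne_zero,
      ← mul_div_assoc (√(a / b : ℝ) ^ k), sqrt_pow_mul_sqrt_pow, sub_eq_add_neg, Real.exp_add]
    field_simp
  calc
    (Po(a).prod Po(b)).real {p | p.1 = p.2 + k} = (∫⁻ j, Po(a) {j + k} ∂Po(b)).toReal := by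
      rw [measureReal_def, Measure.prod_apply_symm .of_discrete]
      rfl
    _ = ∫ j, Po(a).real {j + k} ∂Po(b) := (integral_toReal .of_discrete (by simp)).symm
    _ = ∑' j : ℕ, Real.exp (-b) * b ^ j / j.factorial * Po(a).real {j + k} :=
      integral_poissonMeasure b _
    _ = Real.exp (-a - b) * (√(a / b) ^ k * besselI k (2 * √(a * b))) := by
      simp only [summand_eq, tsum_mul_left, besselI]

lemma measureReal_poissonMeasure_prod_snd_le_fst (hb : b ≠ 0) :
    (Po(a).prod Po(b)).real {p | p.2 ≤ p.1} = marcumQ1 √(2 * a) √(2 * b) := by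
  have le_eq_iUnion : {p : ℕ × ℕ | p.2 ≤ p.1} = ⋃ k, {p | p.1 = p.2 + k} := by
    ext p
    simp only [Set.mem_ofPred_eq, Set.mem_iUnion, le_iff_exists_add]
  have pairwise_disjoint :
      Pairwise (Function.onFun Disjoint fun k ↦ {p : ℕ × ℕ | p.1 = p.2 + k}) := fun k l hkl ↦
    Set.disjoint_left.2 fun p hk hl ↦ hkl (Nat.add_left_cancel (hk.symm.trans hl))
  have sqrt_div : √(2 * a : ℝ) / √(2 * b) = √(a / b) := by
    rw [← Real.sqrt_div' _ (by positivity), mul_div_mul_left _ _ two_ne_zero]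
  have sqrt_mul : √(2 * a : ℝ) * √(2 * b) = 2 * √(a * b) := by
    rw [Real.sqrt_mul zero_le_two, Real.sqrt_mul zero_le_two, mul_mul_mul_comm,
      Real.mul_self_sqrt zero_le_two, Real.sqrt_mul a.coe_nonneg]
  have exponent_eq : -(√(2 * a : ℝ) ^ 2 + √(2 * b : ℝ) ^ 2) / 2 = -a - b := by
    rw [Real.sq_sqrt (by positivity), Real.sq_sqrt (by positivity)]
    ring
  rw [measureReal_def, le_eq_iUnion, measure_iUnion pairwise_disjoint fun _ ↦ .of_discrete,
    ENNReal.tsum_toReal_eq (by finiteness)]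
  simp only [← measureReal_def, measureReal_poissonMeasure_prod_fst_eq_snd_add hb, marcumQ1,
    sqrt_div, sqrt_mul, exponent_eq, tsum_mul_left]

end Skellam

lemma measureReal_snd_le_fst_eq_add (μ : Measure (ℕ × ℕ)) [IsFiniteMeasure μ] :
    μ.real {p | p.2 ≤ p.1} =
      μ.real {p | p.2 + 1 < p.1} + (μ.real {p | p.1 = p.2} + μ.real {p | p.1 = p.2 + 1}) := by
  have disjoint_eq : Disjoint {p : ℕ × ℕ | p.1 = p.2} {p | p.1 = p.2 + 1} :=
    Set.disjoint_left.2 fun p h h' ↦ by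
      simp only [Set.mem_ofPred_eq] at h h'
      omega
  have disjoint_lt :
      Disjoint {p : ℕ × ℕ | p.2 + 1 < p.1} ({p | p.1 = p.2} ∪ {p | p.1 = p.2 + 1}) :=
    Set.disjoint_left.2 fun p h h' ↦ by
      simp only [Set.mem_ofPred_eq, Set.mem_union] at h h'
      omega
  rw [← measureReal_union disjoint_eq .of_discrete, ← measureReal_union disjoint_lt .of_discrete]
  congr 1
  ext p
  simp only [Set.mem_ofPred_eq, Set.mem_union]
  omega

section Difference

variable (a b : ℝ≥0)

lemma integrable_sub_poissonMeasure_prod :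
    Integrable (fun p : ℕ × ℕ ↦ (p.1 : ℝ) - p.2) (Po(a).prod Po(b)) :=
  ((integrable_natCast_poissonMeasure a).comp_fst Po(b)).sub
    ((integrable_natCast_poissonMeasure b).comp_snd Po(a))

lemma setIntegral_sub_poissonMeasure_prod (s : Set (ℕ × ℕ)) :
    ∫ p in s, ((p.1 : ℝ) - p.2) ∂Po(a).prod Po(b) =
      a * (Po(a).prod Po(b)).real {p | (p.1 + 1, p.2) ∈ s} -
        b * (Po(a).prod Po(b)).real {p | (p.1, p.2 + 1) ∈ s} := by
  rw [integral_sub ((integrable_natCast_poissonMeasure a).comp_fst Po(b)).integrableOn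
      ((integrable_natCast_poissonMeasure b).comp_snd Po(a)).integrableOn,
    setIntegral_fst_poissonMeasure_prod _ _ .of_discrete,
    setIntegral_snd_prod_poissonMeasure _ _ .of_discrete]

lemma integral_sub_poissonMeasure_prod :
    ∫ p, ((p.1 : ℝ) - p.2) ∂Po(a).prod Po(b) = a - b := by
  simpa using setIntegral_sub_poissonMeasure_prod a b Set.univ

lemma setIntegral_pos_sub_poissonMeasure_prod :
    ∫ p in {p | 0 < (p.1 : ℝ) - p.2}, ((p.1 : ℝ) - p.2) ∂Po(a).prod Po(b) =
      (a - b) * (Po(a).prod Po(b)).real {p | p.2 ≤ p.1} +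
        b * ((Po(a).prod Po(b)).real {p | p.1 = p.2} +
          (Po(a).prod Po(b)).real {p | p.1 = p.2 + 1}) := by
  rw [setIntegral_sub_poissonMeasure_prod]
  simp only [Set.mem_ofPred_eq, sub_pos, Nat.cast_lt, Nat.lt_succ_iff]
  rw [measureReal_snd_le_fst_eq_add]
  ring

end Difference

theorem stmt_18_general {Ω : Type*} {mΩ : MeasurableSpace Ω} {μ : Measure Ω} {x y : ℝ≥0}
    (hy : y ≠ 0) {X Y : Ω → ℕ} (hX : HasLaw X Po(x) μ) (hY : HasLaw Y Po(y) μ)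
    (hindep : IndepFun X Y μ) :
    ∫ ω, |(X ω : ℝ) - (Y ω : ℝ)| ∂μ =
      2 * Real.exp (-x - y) *
          (y * besselI 0 (2 * √(x * y)) + √(x * y) * besselI 1 (2 * √(x * y))) +
        (y - x) * (1 - 2 * marcumQ1 √(2 * x) √(2 * y)) := by
  have := hX.isProbabilityMeasure
  have law_pair : HasLaw (fun ω ↦ (X ω, Y ω)) (Po(x).prod Po(y)) μ := hindep.hasLaw_prod hX hY
  have prob_eq := measureReal_poissonMeasure_prod_fst_eq_snd_add (a := x) hy 0
  have prob_eq_succ := measureReal_poissonMeasure_prod_fst_eq_snd_add (a := x) hy 1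
  simp only [add_zero, pow_zero, pow_one, one_mul] at prob_eq prob_eq_succ
  have mul_sqrt_div : y * √(x / y : ℝ) = √(x * y) := by
    rw [Real.sqrt_div' _ y.coe_nonneg, Real.sqrt_mul x.coe_nonneg, mul_div_left_comm,
      Real.div_sqrt]
  calc
    ∫ ω, |(X ω : ℝ) - (Y ω : ℝ)| ∂μ = ∫ p, |(p.1 : ℝ) - p.2| ∂Po(x).prod Po(y) :=
      law_pair.integral_comp (f := fun p ↦ |(p.1 : ℝ) - p.2|) (by fun_prop)
    _ = 2 * ((x - y) * marcumQ1 √(2 * x) √(2 * y) +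
          y * (Real.exp (-x - y) * besselI 0 (2 * √(x * y)) +
            Real.exp (-x - y) * (√(x / y) * besselI 1 (2 * √(x * y))))) - (x - y) := by
      rw [integral_abs_eq_two_mul_setIntegral_pos_sub (integrable_sub_poissonMeasure_prod x y),
        setIntegral_pos_sub_poissonMeasure_prod, integral_sub_poissonMeasure_prod, prob_eq,
        prob_eq_succ, measureReal_poissonMeasure_prod_snd_le_fst hy]
    _ = _ := by
      linear_combination 2 * Real.exp (-x - y) * besselI 1 (2 * √(x * y)) * mul_sqrt_div

theorem stmt_18 {Ω : Type*} [MeasurableSpace Ω] (μ : Measure Ω) [IsProbabilityMeasure μ]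
    (x : ℝ) (hx : 0 < x) (X Y : Ω → ℕ)
    (hX : ∀ j : ℕ, μ {ω | X ω = j}
      = ENNReal.ofReal (Real.exp (-x) * x ^ j / Nat.factorial j))
    (hY : ∀ j : ℕ, μ {ω | Y ω = j}
      = ENNReal.ofReal (Real.exp (-1) / Nat.factorial j))
    (hindep : IndepFun X Y μ) :
    ∫ ω, |(X ω : ℝ) - (Y ω : ℝ)| ∂μ
      = 2 * Real.exp (-x - 1) * (besselI 0 (2 * Real.sqrt x)
          + Real.sqrt x * besselI 1 (2 * Real.sqrt x))
        + (1 - x) * (1 - 2 * marcumQ1 (Real.sqrt (2 * x)) (Real.sqrt 2)) := by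
  lift x to ℝ≥0 using hx.le
  have law_X : HasLaw X Po(x) μ := hasLaw_of_measure_preimage_singleton_eq (by simp) fun j ↦
    (hX j).trans (poissonMeasure_singleton x j).symm
  have law_Y : HasLaw Y Po(1) μ := hasLaw_of_measure_preimage_singleton_eq (by simp) fun j ↦
    (hY j).trans (by simp [poissonMeasure_singleton])
  simpa using stmt_18_general one_ne_zero law_X law_Y hindep
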